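/- Let u be a positive divisor of q−1, let w = n'−2 and y ∈ {1, ..., m}. Then the repair bandwidth b = Σ_{(w',z) ∈ ({0,...,n'−1}×{1,...,m}) \ {(n'−2,y)}} rank_B({ζ^{u(t + s·d_{w',z})} : t ∈ T_{n'−2,y}, s ∈ {0, ..., r̄−1}}) of the linear repair scheme of Construction 2 for a node of rack (n'−2, y) satisfies b < ((n̄−1) + (m+3)r̄ + 4)·l/r̄. -/

import Mathlib

/-- `∏_{j=1}^{y-1} p_j` (the empty product is `1`). -/
def bigP (p : ℕ → ℕ) (y : ℕ) : ℕ := ∏ j ∈ Finset.Icc 1 (y - 1), p j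

/-- `d_{w,y} = r^w · ∏_{j=1}^{y-1} p_j`. -/
def dwy (p : ℕ → ℕ) (r w y : ℕ) : ℕ := r ^ w * bigP p y

/-- The digit of `t` at position `pos = w·m + y` (`1 ≤ y ≤ m`) in the multi-base
expansion `t = Σ_{w,y} t_{wm+y} · d_{w,y}`, namely `(t / d_{w,y}) % p_y`. -/
def digit (p : ℕ → ℕ) (m r t pos : ℕ) : ℕ :=
  t / dwy p r ((pos - 1) / m) ((pos - 1) % m + 1) % p ((pos - 1) % m + 1)

/-- Extending the partial product by one factor. -/
theorem bigP_succ (p : ℕ → ℕ) {y : ℕ} (hy : 1 ≤ y) : bigP p (y + 1) = bigP p y * p y := by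
  obtain ⟨k, rfl⟩ : ∃ k, y = k + 1 := ⟨y - 1, by omega⟩
  simp only [bigP, Nat.add_sub_cancel]
  rw [Finset.prod_Icc_succ_top (by omega)]

theorem bigP_one (p : ℕ → ℕ) : bigP p 1 = 1 := by simp [bigP]

theorem bigP_pos {p : ℕ → ℕ} {m : ℕ} (hp : ∀ i ∈ Finset.Icc 1 m, (p i).Prime) {y : ℕ}
    (hy : y ≤ m + 1) : 0 < bigP p y := by
  refine Finset.prod_pos fun j hj => (hp j ?_).pos
  simp only [Finset.mem_Icc] at hj ⊢
  omega

theorem bigP_dvd_bigP (p : ℕ → ℕ) {y z : ℕ} (h : y ≤ z) : bigP p y ∣ bigP p z :=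
  Finset.prod_dvd_prod_of_subset _ _ _ (Finset.Icc_subset_Icc_right (by omega))

/-- The partial products at least double at each step, so they dominate the sum of the
preceding ones. -/
theorem sum_bigP_le {p : ℕ → ℕ} {m : ℕ} (hp : ∀ i ∈ Finset.Icc 1 m, (p i).Prime) {k : ℕ}
    (hk : k ≤ m) : ∑ z ∈ Finset.Icc 1 k, bigP p z ≤ bigP p (k + 1) := by
  induction k with
  | zero => simp
  | succ k ih =>
    rw [Finset.sum_Icc_succ_top (by omega), bigP_succ p (by omega : 1 ≤ k + 1)]
    have h2 := (hp (k + 1) (by simp; omega)).two_le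
    have := ih (by omega)
    nlinarith [bigP_pos hp (by omega : k + 1 ≤ m + 1)]

theorem sum_pow_succ_le {r : ℕ} (hr : 2 ≤ r) (k : ℕ) :
    ∑ w ∈ Finset.range k, r ^ w * r ≤ 2 * r ^ k := by
  induction k with
  | zero => simp
  | succ k ih =>
    rw [Finset.sum_range_succ, pow_succ]
    nlinarith [pow_pos (by omega : 0 < r) k]

/-- Place values of consecutive positions (counted from `0`) differ by the base of the lower
position. -/
theorem dwy_succ {p : ℕ → ℕ} {m r : ℕ} (hm : 0 < m) (hr : r = bigP p (m + 1)) (i : ℕ) :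
    dwy p r ((i + 1) / m) ((i + 1) % m + 1) =
      dwy p r (i / m) (i % m + 1) * p (i % m + 1) := by
  have hlt := Nat.mod_lt i hm
  have hi := Nat.div_add_mod i m
  unfold dwy
  rw [mul_assoc, ← bigP_succ p (by omega)]
  rcases (by omega : i % m + 1 < m ∨ i % m + 1 = m) with h | h
  · have hd : (i + 1) / m = i / m := by
      rw [Nat.div_eq_iff hm, mul_comm]; omega
    have hmod : (i + 1) % m = i % m + 1 := by
      have := Nat.div_add_mod (i + 1) m
      rw [hd] at this; omega
    rw [hd, hmod]
  · have he : i + 1 = m * (i / m + 1) := by rw [mul_add]; omega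
    have hd : (i + 1) / m = i / m + 1 := by rw [he, Nat.mul_div_cancel_left _ hm]
    have hmod : (i + 1) % m = 0 := by rw [he, Nat.mul_mod_right]
    rw [hd, hmod, h, ← hr, zero_add, bigP_one, pow_succ, mul_one]

/-- If the digits of `t` at positions `i + 1, …, i + K` vanish, then `t` is the sum of its
part below position `i + 1` and its part above position `i + K`. -/
theorem eq_mod_add_of_digit_eq_zero {p : ℕ → ℕ} {m r : ℕ} (hm : 0 < m)
    (hr : r = bigP p (m + 1)) {t i K : ℕ} (h : ∀ k < K, digit p m r t (i + 1 + k) = 0) :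
    t = t % dwy p r (i / m) (i % m + 1) +
      dwy p r ((i + K) / m) ((i + K) % m + 1) *
        (t / dwy p r ((i + K) / m) ((i + K) % m + 1)) := by
  induction K with
  | zero => exact (Nat.mod_add_div _ _).symm
  | succ K ih =>
    have hK := h K (by omega)
    have ih := ih fun k hk => h k (by omega)
    rw [digit, show i + 1 + K - 1 = i + K by omega] at hK
    rw [← add_assoc, dwy_succ hm hr (i + K), ← Nat.div_div_eq_div_mul, mul_assoc,
      Nat.mul_div_cancel' (Nat.dvd_of_mod_eq_zero hK)]
    exact ih

/-- Members of the set `T_{N,y}` are `a + b · r · d_{N,y}` with `a < d_{N,y}` and `b < c`. -/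
theorem exists_eq_of_digit_eq_zero {p : ℕ → ℕ} {m r : ℕ} (hm : 0 < m)
    (hr : r = bigP p (m + 1)) {t N y c : ℕ} (hy : 1 ≤ y) (hym : y ≤ m)
    (hpos : 0 < dwy p r N y) (ht : t < dwy p r N y * r * c)
    (h : ∀ k < m, digit p m r t (N * m + y + k) = 0) :
    ∃ a < dwy p r N y, ∃ b < c, t = a + b * (dwy p r N y * r) := by
  have hd : (N * m + (y - 1)) / m = N := by
    rw [mul_comm, Nat.mul_add_div hm, Nat.div_eq_of_lt (by omega), add_zero]
  have hmod : (N * m + (y - 1)) % m + 1 = y := by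
    rw [mul_comm, Nat.mul_add_mod, Nat.mod_eq_of_lt (by omega)]; omega
  have key := eq_mod_add_of_digit_eq_zero (K := m) hm hr (t := t) (i := N * m + (y - 1))
    (fun k hk => by
      rw [show N * m + (y - 1) + 1 + k = N * m + y + k by omega]; exact h k hk)
  have hD : dwy p r (N + 1) y = dwy p r N y * r := by unfold dwy; ring
  rw [Nat.add_div_right _ hm, Nat.add_mod_right, hd, hmod, hD] at key
  refine ⟨_, Nat.mod_lt t hpos, _, ?_, by rw [mul_comm (t / _)]; exact key⟩
  exact Nat.div_lt_of_lt_mul ht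

/-- The span of powers of `ζ` with exponents in the image of a finite box has dimension at most
the size of the box. -/
theorem finrank_span_le_of_box {B F : Type*} [Field B] [Field F] [Algebra B F] (ζ : F) (u M : ℕ)
    {S : Set F} {X Y : ℕ} (hS : ∀ x ∈ S, ∃ a < X, ∃ b < Y, x = ζ ^ (u * (a + b * M))) :
    Module.finrank B (Submodule.span B S) ≤ X * Y := by
  classical
  set T : Finset F := (Finset.range X ×ˢ Finset.range Y).image
    fun ab => ζ ^ (u * (ab.1 + ab.2 * M))
  have hST : S ⊆ (T : Set F) := fun x hx => by
    obtain ⟨a, ha, b, hb, rfl⟩ := hS x hx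
    exact Finset.mem_coe.2 (Finset.mem_image.2 ⟨(a, b), by simp [ha, hb], rfl⟩)
  calc Module.finrank B (Submodule.span B S)
      ≤ Module.finrank B (Submodule.span B (T : Set F)) :=
        Submodule.finrank_mono (Submodule.span_mono hST)
    _ ≤ T.card := finrank_span_finset_le_card T
    _ ≤ X * Y := by
        refine Finset.card_image_le.trans ?_
        simp

/-- Bound for the excess of the download from rack `(w, z)` over `l / r`, in units of `l`, when
a node of rack `(N, y)` is repaired. -/
noncomputable def excess (p : ℕ → ℕ) (r N y w z : ℕ) : ℝ :=
  if w < N then (r : ℝ) ^ w * bigP p z / (r : ℝ) ^ N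
  else if w = N then
    if z < y then (bigP p z : ℝ) / bigP p y else if z = y then 0 else 1
  else if z < y then 1 else (bigP p z : ℝ) / r

theorem excess_nonneg (p : ℕ → ℕ) (r N y w z : ℕ) : 0 ≤ excess p r N y w z := by
  unfold excess
  split_ifs <;> positivity

theorem sum_excess_le {p : ℕ → ℕ} {m : ℕ} (hp : ∀ i ∈ Finset.Icc 1 m, (p i).Prime)
    {r : ℕ} (hr : r = bigP p (m + 1)) (hr2 : 2 ≤ r) (N : ℕ) {y : ℕ} (hy : y ∈ Finset.Icc 1 m) :
    ∑ wz ∈ Finset.range (N + 2) ×ˢ Finset.Icc 1 m, excess p r N y wz.1 wz.2 ≤ m + 3 := by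
  have hr0 : (0 : ℝ) < r := by exact_mod_cast (by omega : 0 < r)
  have hym := Finset.mem_Icc.1 hy
  have hP : (0 : ℝ) < bigP p y := by exact_mod_cast bigP_pos hp (by omega : y ≤ m + 1)
  have hsum : ∑ z ∈ Finset.Icc 1 m, (bigP p z : ℝ) ≤ r := by
    rw [hr]; exact_mod_cast sum_bigP_le hp le_rfl
  have hsumy : ∑ z ∈ Finset.Icc 1 m, (if z < y then (bigP p z : ℝ) else 0) ≤ bigP p y := by
    rw [← Finset.sum_filter]
    have hf : (Finset.Icc 1 m).filter (· < y) = Finset.Icc 1 (y - 1) := by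
      ext z; simp only [Finset.mem_filter, Finset.mem_Icc]; omega
    rw [hf]
    have := sum_bigP_le hp (by omega : y - 1 ≤ m)
    rw [Nat.sub_add_cancel hym.1] at this
    exact_mod_cast this
  rw [Finset.sum_product, Finset.sum_range_succ, Finset.sum_range_succ, add_assoc,
    ← Finset.sum_add_distrib]
  have hlow : ∑ w ∈ Finset.range N, ∑ z ∈ Finset.Icc 1 m, excess p r N y w z ≤ 2 := by
    calc ∑ w ∈ Finset.range N, ∑ z ∈ Finset.Icc 1 m, excess p r N y w z
        ≤ ∑ w ∈ Finset.range N, (r : ℝ) ^ w * r / (r : ℝ) ^ N := by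
          refine Finset.sum_le_sum fun w hw => ?_
          have : ∀ z, excess p r N y w z = (r : ℝ) ^ w * bigP p z / (r : ℝ) ^ N := fun z => by
            simp [excess, Finset.mem_range.1 hw]
          simp only [this]
          rw [← Finset.sum_div, ← Finset.mul_sum]
          gcongr
      _ ≤ 2 := by
          rw [← Finset.sum_div, div_le_iff₀ (by positivity)]
          exact_mod_cast sum_pow_succ_le hr2 N
  have hhigh : ∑ z ∈ Finset.Icc 1 m, (excess p r N y N z + excess p r N y (N + 1) z)
      ≤ m + 1 := by
    calc ∑ z ∈ Finset.Icc 1 m, (excess p r N y N z + excess p r N y (N + 1) z)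
        ≤ ∑ z ∈ Finset.Icc 1 m, ((1 - if z = y then (1 : ℝ) else 0) +
            (if z < y then (bigP p z : ℝ) else 0) / bigP p y + (bigP p z : ℝ) / r) := by
          refine Finset.sum_le_sum fun z _ => ?_
          have h0 : (0 : ℝ) ≤ (bigP p z : ℝ) / r := by positivity
          rcases lt_trichotomy z y with h | h | h
          · simp [excess, h, h.ne]; linarith
          · simp [excess, h]
          · simp [excess, h.ne', h.not_gt]
      _ ≤ m + 1 := by
          rw [Finset.sum_add_distrib, Finset.sum_add_distrib, Finset.sum_sub_distrib,
            ← Finset.sum_div, ← Finset.sum_div, Finset.sum_ite_eq', if_pos hy]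
          have h1 := (div_le_one hr0).2 hsum
          have h2 := (div_le_one hP).2 hsumy
          simp only [Finset.sum_const, Nat.card_Icc, nsmul_eq_mul, mul_one,
            Nat.add_sub_cancel]
          linarith
  linarith

/-- The symbols whose span over the base field is downloaded from rack `(w, z)` when a node of
rack `(N, y)` is repaired. -/
def downloadSet (p : ℕ → ℕ) (m r N y w z : ℕ) {F : Type*} [Field F] (ζ : F) (u : ℕ) : Set F :=
  {x : F | ∃ t, (t < r ^ (N + 2) ∧ ∀ k < m, digit p m r t (N * m + y + k) = 0) ∧
    ∃ s < r, x = ζ ^ (u * (t + s * dwy p r w z))}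

/-- Bound on the download from a single helper rack. -/
theorem finrank_download_le {p : ℕ → ℕ} {m : ℕ} (hm : 0 < m)
    (hp : ∀ i ∈ Finset.Icc 1 m, (p i).Prime) {r : ℕ} (hr : r = bigP p (m + 1))
    {N y w z : ℕ} (hy : y ∈ Finset.Icc 1 m) (hw : w < N + 2)
    (hne : ¬(w = N ∧ z = y)) {B F : Type*} [Field B] [Field F] [Finite F] [Algebra B F]
    (hrk : Module.finrank B F = r ^ (N + 2)) (ζ : F) (u : ℕ) :
    (Module.finrank B (Submodule.span B (downloadSet p m r N y w z ζ u)) : ℝ) ≤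
      (r : ℝ) ^ (N + 1) * (1 + r * excess p r N y w z) := by
  have hym := Finset.mem_Icc.1 hy
  have hPy : 0 < bigP p y := bigP_pos hp (by omega)
  have hrpos : 0 < r := hr ▸ bigP_pos hp le_rfl
  have hr0 : (0 : ℝ) < r := by exact_mod_cast hrpos
  have hP0 : (0 : ℝ) < bigP p y := by exact_mod_cast hPy
  have hD : 0 < dwy p r N y := Nat.mul_pos (pow_pos hrpos _) hPy
  obtain ⟨c, hc⟩ : bigP p y ∣ r := hr ▸ bigP_dvd_bigP p (by omega)
  have hl : r ^ (N + 2) = dwy p r N y * r * c := by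
    calc r ^ (N + 2) = r ^ N * r * r := by ring
      _ = r ^ N * r * (bigP p y * c) := by rw [← hc]
      _ = dwy p r N y * r * c := by unfold dwy; ring
  have hcR : (r : ℝ) = bigP p y * c := by exact_mod_cast hc
  have htrivial : excess p r N y w z = 1 →
      (Module.finrank B (Submodule.span B (downloadSet p m r N y w z ζ u)) : ℝ) ≤
      (r : ℝ) ^ (N + 1) * (1 + r * excess p r N y w z) := fun he => by
    have h1 : (Module.finrank B (Submodule.span B (downloadSet p m r N y w z ζ u)) : ℝ) ≤
        (r : ℝ) ^ (N + 2) := by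
      exact_mod_cast hrk ▸ Submodule.finrank_le _
    rw [he]
    nlinarith [pow_pos hr0 (N + 1), pow_succ (r : ℝ) (N + 1)]
  have hlower : (dwy p r w z : ℝ) / dwy p r N y ≤ excess p r N y w z →
      (Module.finrank B (Submodule.span B (downloadSet p m r N y w z ζ u)) : ℝ) ≤
      (r : ℝ) ^ (N + 1) * (1 + r * excess p r N y w z) := fun he => by
    have hb := finrank_span_le_of_box (B := B) ζ u (dwy p r N y * r)
      (X := dwy p r N y + r * dwy p r w z) (Y := c)
      (S := downloadSet p m r N y w z ζ u) (by
        rintro x ⟨t, ⟨ht, hdig⟩, s, hs, rfl⟩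
        obtain ⟨a, ha, b, hb, rfl⟩ :=
          exists_eq_of_digit_eq_zero hm hr hym.1 hym.2 hD (hl ▸ ht) hdig
        refine ⟨a + s * dwy p r w z, ?_, b, hb, by congr 2; ring⟩
        have := Nat.mul_le_mul_right (dwy p r w z) hs.le
        omega)
    have hD0 : (0 : ℝ) < dwy p r N y := by exact_mod_cast hD
    have hDc : (dwy p r N y : ℝ) * c = (r : ℝ) ^ (N + 1) := by
      calc (dwy p r N y : ℝ) * c = (r : ℝ) ^ N * (bigP p y * c) := by
            simp only [dwy]; push_cast; ring
        _ = (r : ℝ) ^ (N + 1) := by rw [← hcR, pow_succ]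
    calc _ ≤ (((dwy p r N y + r * dwy p r w z) * c : ℕ) : ℝ) := by exact_mod_cast hb
      _ = (dwy p r N y * c : ℝ) * (1 + r * (dwy p r w z / dwy p r N y)) := by
          push_cast; field_simp
      _ ≤ _ := by rw [hDc]; gcongr
  rcases lt_trichotomy w N with h | h | h
  · apply hlower
    have h1 : (1 : ℝ) ≤ bigP p y := by exact_mod_cast hPy
    simp only [excess, h, if_true, dwy]
    push_cast
    gcongr
    exact le_mul_of_one_le_right (by positivity) h1
  · subst h
    rcases lt_trichotomy z y with h' | h' | h'
    · apply hlower
      simp only [excess, lt_irrefl, if_false, if_true, h', dwy]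
      push_cast
      rw [mul_div_mul_left _ _ (by positivity)]
    · exact absurd ⟨rfl, h'⟩ hne
    · exact htrivial (by simp [excess, h'.ne', h'.not_gt])
  · obtain rfl : w = N + 1 := by omega
    by_cases h' : z < y
    · exact htrivial (by simp [excess, h'])
    obtain ⟨g, hg⟩ := bigP_dvd_bigP p (not_lt.1 h')
    have hd : dwy p r (N + 1) z = g * (dwy p r N y * r) := by
      unfold dwy; rw [hg]; ring
    have hb := finrank_span_le_of_box (B := B) ζ u (dwy p r N y * r)
      (X := dwy p r N y) (Y := c + r * g)
      (S := downloadSet p m r N y (N + 1) z ζ u) (by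
        rintro x ⟨t, ⟨ht, hdig⟩, s, hs, rfl⟩
        obtain ⟨a, ha, b, hb, rfl⟩ :=
          exists_eq_of_digit_eq_zero hm hr hym.1 hym.2 hD (hl ▸ ht) hdig
        refine ⟨a, ha, b + s * g, ?_, by rw [hd]; congr 2; ring⟩
        have := Nat.mul_le_mul_right g hs.le
        omega)
    have he : excess p r N y (N + 1) z = (bigP p y * g : ℝ) / r := by
      simp [excess, h', hg]
    calc _ ≤ ((dwy p r N y * (c + r * g) : ℕ) : ℝ) := by exact_mod_cast hb
      _ = (r : ℝ) ^ N * (bigP p y * c + r * (bigP p y * g)) := by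
          simp only [dwy]; push_cast; ring
      _ = _ := by rw [← hcR, he]; field_simp; ring

/-- **Theorem 6(ii).** Construction-2 setting: `B = GF(q)`,
primes `p 1, …, p m` (`m ≥ 2`), `r = p 1 ⋯ p m`, `n' ≥ 2`, `n̄ = n'm`,
`l = r^{n'}`, `F = GF(q^l)`, `ζ` primitive in `F`, `u > 0` a divisor of `q-1`.
For the host rack `(n'-2, y)` with `y ∈ {1, …, m}`, and
`T_{n'-2,y} = {t < l : digits of t at positions (n'-2)m+y, …, (n'-2)m+y+m-1 are 0}`,
the repair bandwidth
`b = Σ_{(w',z) ≠ (n'-2,y)} rank_B({ζ^{u(t+s·d_{w',z})} : t ∈ T_{n'-2,y}, s < r})`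
satisfies `b < ((n̄-1) + (m+3)r + 4)·l/r`. -/
theorem stmt_14 (q m : ℕ) (hm : 2 ≤ m) (p : ℕ → ℕ)
    (hp : ∀ i ∈ Finset.Icc 1 m, (p i).Prime)
    (r : ℕ) (hr : r = ∏ i ∈ Finset.Icc 1 m, p i)
    (n' : ℕ) (hn' : 2 ≤ n') (l : ℕ) (hl : l = r ^ n')
    (B F : Type*) [Field B] [Field F] [Fintype B] [Fintype F] [Algebra B F]
    (hq : Fintype.card B = q) (hrk : Module.finrank B F = l)
    (ζ : F) (hζ : orderOf ζ = q ^ l - 1)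
    (u : ℕ) (hu : 0 < u) (hdvd : u ∣ q - 1)
    (y : ℕ) (hy : y ∈ Finset.Icc 1 m) :
    ((∑ wz ∈ (Finset.range n' ×ˢ Finset.Icc 1 m).erase (n' - 2, y),
        Module.finrank B ↥(Submodule.span B
          {x : F | ∃ t, (t < l ∧ ∀ k < m, digit p m r t ((n' - 2) * m + y + k) = 0) ∧
            ∃ s < r, x = ζ ^ (u * (t + s * dwy p r wz.1 wz.2))}) : ℕ) : ℝ)
      < (((n' * m : ℕ) : ℝ) - 1 + (m + 3) * r + 4) * l / r := by
  replace hr : r = bigP p (m + 1) := hr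
  have hr2 : 2 ≤ r := by
    obtain ⟨k, rfl⟩ : ∃ k, m = k + 1 := ⟨m - 1, by omega⟩
    rw [hr, bigP_succ p (by omega)]
    exact (hp _ (by simp)).two_le.trans
      (Nat.le_mul_of_pos_left _ (bigP_pos hp (by omega)))
  have hr0 : (0 : ℝ) < r := by exact_mod_cast (by omega : 0 < r)
  obtain ⟨N, rfl⟩ : ∃ N, n' = N + 2 := ⟨n' - 2, by omega⟩
  subst hl
  simp only [Nat.add_sub_cancel]
  have hmem : (N, y) ∈ Finset.range (N + 2) ×ˢ Finset.Icc 1 m := by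
    simp only [Finset.mem_product, Finset.mem_range]
    exact ⟨by omega, hy⟩
  have hcard : (((Finset.range (N + 2) ×ˢ Finset.Icc 1 m).erase (N, y)).card : ℝ) =
      ((N + 2) * m : ℕ) - 1 := by
    rw [Finset.cast_card_erase_of_mem hmem]
    simp
  have hexc : ∑ wz ∈ (Finset.range (N + 2) ×ˢ Finset.Icc 1 m).erase (N, y),
      excess p r N y wz.1 wz.2 ≤ m + 3 :=
    (Finset.sum_le_sum_of_subset_of_nonneg (Finset.erase_subset _ _)
      fun _ _ _ => excess_nonneg ..).trans (sum_excess_le hp hr hr2 N hy)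
  rw [Nat.cast_sum]
  calc _ ≤ ∑ wz ∈ (Finset.range (N + 2) ×ˢ Finset.Icc 1 m).erase (N, y),
        (r : ℝ) ^ (N + 1) * (1 + r * excess p r N y wz.1 wz.2) := by
        refine Finset.sum_le_sum fun wz hwz => ?_
        obtain ⟨hne, hwz⟩ := Finset.mem_erase.1 hwz
        have hw := (Finset.mem_product.1 hwz).1
        exact finrank_download_le (by omega) hp hr hy (Finset.mem_range.1 hw)
          (fun h => hne (Prod.ext h.1 h.2)) hrk ζ u
    _ = (r : ℝ) ^ (N + 1) * ((((N + 2) * m : ℕ) : ℝ) - 1 + r *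
          ∑ wz ∈ (Finset.range (N + 2) ×ˢ Finset.Icc 1 m).erase (N, y),
            excess p r N y wz.1 wz.2) := by
        rw [← Finset.mul_sum, Finset.sum_add_distrib, ← Finset.mul_sum, Finset.sum_const,
          nsmul_eq_mul, mul_one, hcard]
    _ < (r : ℝ) ^ (N + 1) * ((((N + 2) * m : ℕ) : ℝ) - 1 + (m + 3) * r + 4) := by
        refine mul_lt_mul_of_pos_left ?_ (by positivity)
        nlinarith
    _ = _ := by
        push_cast
        field_simp
        ring
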